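/- arXiv:2405.05577 — 2 statements merged into one kernel-verified Lean document; each statement's English description precedes it below -/
import Mathlib

section
/- Let n ≥ 1 and 0 < α, s < 1. For any complex-valued Schwartz function φ on ℝⁿ×ℝ, the function (x,t) ↦ D_right^α φ(x,t) + (-Δ)^s φ(x,t) is integrable on ℝⁿ×ℝ, and for every (ξ,ρ) ∈ ℝⁿ×ℝ one has 𝓕[D_right^α φ + (-Δ)^s φ](ξ,ρ) = ((−iρ)^α + |ξ|^{2s})·𝓕φ(ξ,ρ), where (−iρ)^α denotes the principal branch of the complex power (interpreted as 0 when ρ = 0). -/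
open MeasureTheory Set

/-- The normalization constant `C_α = 1/|Γ(-α)|` for the Marchaud fractional derivative. -/
noncomputable def Calpha (α : ℝ) : ℝ := 1 / |Real.Gamma (-α)|

/-- The normalization constant `C_{n,s} = 4^s Γ(n/2+s)/(π^{n/2}|Γ(-s)|)` for the
fractional Laplacian. -/
noncomputable def Cns (n : ℕ) (s : ℝ) : ℝ :=
  (4 : ℝ) ^ s * Real.Gamma ((n : ℝ) / 2 + s) / (Real.pi ^ ((n : ℝ) / 2) * |Real.Gamma (-s)|)

/-- The right Marchaud fractional derivative of order `α` in the time variable, for a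
complex-valued function: `D_right^α φ(x,t) = C_α ∫_t^∞ (φ(x,t) - φ(x,τ))/(τ-t)^{1+α} dτ`. -/
noncomputable def marchaudRightC {n : ℕ} (α : ℝ) (φ : EuclideanSpace ℝ (Fin n) × ℝ → ℂ)
    (x : EuclideanSpace ℝ (Fin n)) (t : ℝ) : ℂ :=
  (Calpha α : ℂ) * ∫ τ in Ioi t, (φ (x, t) - φ (x, τ)) / (((τ - t) ^ (1 + α) : ℝ) : ℂ)

/-- The left Marchaud fractional derivative of order `α` in the time variable, for a
complex-valued function: `D_left^α φ(x,t) = C_α ∫_{-∞}^t (φ(x,t) - φ(x,τ))/(t-τ)^{1+α} dτ`. -/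
noncomputable def marchaudLeftC {n : ℕ} (α : ℝ) (φ : EuclideanSpace ℝ (Fin n) × ℝ → ℂ)
    (x : EuclideanSpace ℝ (Fin n)) (t : ℝ) : ℂ :=
  (Calpha α : ℂ) * ∫ τ in Iio t, (φ (x, t) - φ (x, τ)) / (((t - τ) ^ (1 + α) : ℝ) : ℂ)

/-- The fractional Laplacian `(-Δ)^s` acting in the space variable, for a complex-valued
function: `(-Δ)^s φ(x,t) = (C_{n,s}/2) ∫_{ℝⁿ} (2φ(x,t) - φ(x+y,t) - φ(x-y,t))/|y|^{n+2s} dy`. -/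
noncomputable def fracLapC {n : ℕ} (s : ℝ) (φ : EuclideanSpace ℝ (Fin n) × ℝ → ℂ)
    (x : EuclideanSpace ℝ (Fin n)) (t : ℝ) : ℂ :=
  ((Cns n s / 2 : ℝ) : ℂ) * ∫ y : EuclideanSpace ℝ (Fin n),
    (2 * φ (x, t) - φ (x + y, t) - φ (x - y, t)) / ((‖y‖ ^ ((n : ℝ) + 2 * s) : ℝ) : ℂ)

open RealInnerProductSpace in
/-- The Fourier transform
`𝓕f(ξ,ρ) = (2π)^{-(n+1)/2} ∫_ℝ ∫_{ℝⁿ} e^{-i(ξ·x + ρt)} f(x,t) dx dt`. -/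
noncomputable def fourierTrans {n : ℕ} (f : EuclideanSpace ℝ (Fin n) × ℝ → ℂ)
    (ξ : EuclideanSpace ℝ (Fin n)) (ρ : ℝ) : ℂ :=
  (((2 * Real.pi) ^ (-(((n : ℝ) + 1) / 2)) : ℝ) : ℂ) *
    ∫ p : EuclideanSpace ℝ (Fin n) × ℝ,
      Complex.exp (-Complex.I * ((⟪ξ, p.1⟫ : ℝ) + ρ * p.2)) * f p

/-!
Both operators are superpositions, against a singular power weight, of differences of translates of
the function, so by Fubini they act on the Fourier side by the same superposition of characters. The
interchange is legitimate because in `L¹` a first difference is `O(min(1, |h|))` and a second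
difference `O(min(1, |h|²))` as soon as the derivatives are integrable, which compensates the
singularity of the weight at the origin.

The symbol of the Marchaud derivative is the Cauchy–Saalschütz integral
`∫₀^∞ r^(-1-α) (exp(-z r) - 1) dr = Γ(-α) z^α` at `z = -iρ`: for `z > 0` it is Euler's integral
integrated by parts, it extends to `Re z > 0` by analyticity and to the imaginary axis by
continuity. The symbol of the fractional Laplacian reduces to the same integral, since
`|y|^(-n-2s)` is a superposition of Gaussians, against which `1 - cos(ξ·y)` integrates to a multiple
of `1 - exp(-r |ξ|²)`.
-/

-- At the default depth `ContinuousENorm (V →L[ℝ] V →L[ℝ] F)` is not found.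
set_option maxSynthPendingDepth 3

open Filter Topology Module
open scoped fwdDiff

section Translation

variable {V F : Type*} [AddCommGroup V] [MeasurableSpace V] [MeasurableAdd V]
  [NormedAddCommGroup F] {μ : Measure V} [μ.IsAddRightInvariant] {f : V → F}

theorem integrable_fwdDiff (hf : Integrable f μ) (h : V) : Integrable (Δ_[h] f) μ :=
  (hf.comp_add_right h).sub hf

theorem integral_norm_fwdDiff_le_two_mul (hf : Integrable f μ) (h : V) :
    ∫ p, ‖Δ_[h] f p‖ ∂μ ≤ 2 * ∫ p, ‖f p‖ ∂μ :=
  calc ∫ p, ‖Δ_[h] f p‖ ∂μ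
      ≤ ∫ p, (‖f (p + h)‖ + ‖f p‖) ∂μ :=
        integral_mono (integrable_fwdDiff hf h).norm ((hf.comp_add_right h).norm.add hf.norm)
          fun p => norm_sub_le _ _
    _ = 2 * ∫ p, ‖f p‖ ∂μ := by
        rw [integral_add (hf.comp_add_right h).norm hf.norm,
          integral_add_right_eq_self (fun p => ‖f p‖) h, two_mul]

end Translation

section FourierIntegral

variable {𝕜 V W F : Type*} [CommRing 𝕜] [TopologicalSpace 𝕜] [IsTopologicalRing 𝕜]
  [AddCommGroup V] [Module 𝕜 V] [TopologicalSpace V] [MeasurableSpace V] [BorelSpace V]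
  [AddCommGroup W] [Module 𝕜 W] [TopologicalSpace W] [NormedAddCommGroup F] [NormedSpace ℂ F]
  {e : AddChar 𝕜 Circle} {μ : Measure V} {L : V →ₗ[𝕜] W →ₗ[𝕜] 𝕜}

theorem fourierIntegral_fwdDiff [MeasurableAdd V] [μ.IsAddRightInvariant] (he : Continuous e)
    (hL : Continuous fun p : V × W => L p.1 p.2) {f : V → F} (hf : Integrable f μ) (h : V) (w : W) :
    VectorFourier.fourierIntegral e μ L (Δ_[h] f) w =
      ((e (L h w) : ℂ) - 1) • VectorFourier.fourierIntegral e μ L f w := by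
  have hsplit : Δ_[h] f + f = f ∘ (· + h) := by ext p; simp [fwdDiff]
  have hadd := congrFun (VectorFourier.fourierIntegral_add he hL (integrable_fwdDiff hf h) hf) w
  rw [hsplit, VectorFourier.fourierIntegral_comp_add_right, Pi.add_apply] at hadd
  rw [sub_smul, one_smul]
  exact eq_sub_of_add_eq hadd.symm

theorem fourierIntegral_integral_smul [SecondCountableTopology V] [SFinite μ] [CompleteSpace F]
    {Y : Type*} [MeasurableSpace Y] {ν : Measure Y} [SFinite ν] (he : Continuous e)
    (hL : Continuous fun p : V × W => L p.1 p.2) {k : Y → ℝ} {T : Y → V → F}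
    (hT : Integrable (fun q : V × Y => k q.2 • T q.2 q.1) (μ.prod ν)) {w : W} {m : Y → ℂ} {c : F}
    (hm : ∀ y, VectorFourier.fourierIntegral e μ L (T y) w = m y • c) :
    VectorFourier.fourierIntegral e μ L (fun p => ∫ y, k y • T y p ∂ν) w =
      (∫ y, k y • m y ∂ν) • c := by
  have hint : Integrable (fun q : V × Y => e (-L q.1 w) • k q.2 • T q.2 q.1) (μ.prod ν) := by
    have hc : Continuous fun v => e (-L v w) := he.comp (hL.comp (.prodMk_left w)).neg
    have hmeas : AEStronglyMeasurable (fun q : V × Y => e (-L q.1 w)) (μ.prod ν) :=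
      hc.aestronglyMeasurable.comp_fst
    refine (integrable_norm_iff (hmeas.fun_smul hT.1)).1 ?_
    simpa only [Circle.norm_smul] using hT.norm
  calc VectorFourier.fourierIntegral e μ L (fun p => ∫ y, k y • T y p ∂ν) w
      = ∫ p, ∫ y, e (-L p w) • k y • T y p ∂ν ∂μ := by
        simp only [VectorFourier.fourierIntegral, Circle.smul_def, integral_smul]
    _ = ∫ y, k y • VectorFourier.fourierIntegral e μ L (T y) w ∂ν := by
        rw [integral_integral_swap hint]
        simp only [VectorFourier.fourierIntegral, Circle.smul_def, smul_comm _ (k _), integral_smul]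
    _ = (∫ y, k y • m y ∂ν) • c := by
        simp only [hm, ← smul_assoc, integral_smul_const]

theorem fourierIntegral_fwdDiff_fwdDiff_neg {V W F : Type*} [AddCommGroup V] [Module ℝ V]
    [TopologicalSpace V] [MeasurableSpace V] [BorelSpace V] [MeasurableAdd V] [AddCommGroup W]
    [Module ℝ W] [TopologicalSpace W] [NormedAddCommGroup F] [NormedSpace ℂ F] {μ : Measure V}
    [μ.IsAddRightInvariant] {L : V →ₗ[ℝ] W →ₗ[ℝ] ℝ}
    (hL : Continuous fun p : V × W => L p.1 p.2) {f : V → F}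
    (hf : Integrable f μ) (h : V) (w : W) :
    VectorFourier.fourierIntegral Real.probChar μ L (Δ_[h] (Δ_[-h] f)) w =
      ((2 * (1 - Real.cos (L h w)) : ℝ) : ℂ) •
        VectorFourier.fourierIntegral Real.probChar μ L f w := by
  rw [fourierIntegral_fwdDiff Real.continuous_probChar hL (integrable_fwdDiff hf _),
    fourierIntegral_fwdDiff Real.continuous_probChar hL hf, smul_smul, map_neg,
    LinearMap.neg_apply, Real.probChar_apply, Real.probChar_apply]
  congr 1
  have hexp : Complex.exp (L h w * Complex.I) * Complex.exp (-(L h w) * Complex.I) = 1 := by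
    rw [← Complex.exp_add, neg_mul, add_neg_cancel, Complex.exp_zero]
  push_cast
  linear_combination hexp + Complex.two_cos (L h w)

end FourierIntegral

section DifferenceEstimates

variable {V F : Type*} [NormedAddCommGroup V] [NormedSpace ℝ V] [NormedAddCommGroup F]
  [NormedSpace ℝ F] {f : V → F}

theorem contDiff_fwdDiff {k : WithTop ℕ∞} (hf : ContDiff ℝ k f) (h : V) :
    ContDiff ℝ k (Δ_[h] f) :=
  (hf.comp (contDiff_id.add contDiff_const)).sub hf

theorem fderiv_fwdDiff (hf : Differentiable ℝ f) (h : V) :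
    fderiv ℝ (Δ_[h] f) = Δ_[h] (fderiv ℝ f) := by
  ext1 p
  change fderiv ℝ (fun q => f (q + h) - f q) p = fderiv ℝ f (p + h) - fderiv ℝ f p
  rw [fderiv_fun_sub (by fun_prop) (hf p), fderiv_comp_add_right]

theorem fwdDiff_eq_integral_fderiv [CompleteSpace F] (hf : ContDiff ℝ 1 f) (h p : V) :
    Δ_[h] f p = ∫ θ in (0 : ℝ)..1, fderiv ℝ f (p + θ • h) h := by
  have : Continuous (fderiv ℝ f) := hf.continuous_fderiv one_ne_zero
  have hderiv (θ : ℝ) :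
      HasDerivAt (fun θ : ℝ => f (p + θ • h)) (fderiv ℝ f (p + θ • h) h) θ := by
    have hline : HasDerivAt (fun θ : ℝ => p + θ • h) h θ := by
      simpa using ((hasDerivAt_id θ).smul_const h).const_add p
    exact (hf.differentiable one_ne_zero _).hasFDerivAt.comp_hasDerivAt θ hline
  rw [intervalIntegral.integral_eq_sub_of_hasDerivAt (fun θ _ => hderiv θ)
    (Continuous.intervalIntegrable (by fun_prop) _ _)]
  simp [fwdDiff]

variable [MeasurableSpace V] [BorelSpace V] {μ : Measure V} [SFinite μ] [μ.IsAddRightInvariant]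
  [CompleteSpace F]

theorem lintegral_enorm_fwdDiff_le (hf : ContDiff ℝ 1 f) (h : V) :
    ∫⁻ p, ‖Δ_[h] f p‖ₑ ∂μ ≤ ‖h‖ₑ * ∫⁻ p, ‖fderiv ℝ f p‖ₑ ∂μ := by
  have hcont : Continuous fun q : V × ℝ => ‖fderiv ℝ f (q.1 + q.2 • h)‖ₑ := by
    have := hf.continuous_fderiv one_ne_zero
    fun_prop
  have hpt (p : V) : ‖Δ_[h] f p‖ₑ ≤ ∫⁻ θ in Ioc (0 : ℝ) 1, ‖h‖ₑ * ‖fderiv ℝ f (p + θ • h)‖ₑ := by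
    rw [fwdDiff_eq_integral_fderiv hf, intervalIntegral.integral_of_le zero_le_one]
    refine (enorm_integral_le_lintegral_enorm _).trans (lintegral_mono fun θ => ?_)
    rw [mul_comm]
    exact ContinuousLinearMap.le_opENorm _ _
  calc ∫⁻ p, ‖Δ_[h] f p‖ₑ ∂μ
      ≤ ∫⁻ p, (∫⁻ θ in Ioc (0 : ℝ) 1, ‖h‖ₑ * ‖fderiv ℝ f (p + θ • h)‖ₑ) ∂μ := lintegral_mono hpt
    _ = ∫⁻ θ in Ioc (0 : ℝ) 1, ∫⁻ p, ‖h‖ₑ * ‖fderiv ℝ f (p + θ • h)‖ₑ ∂μ :=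
        lintegral_lintegral_swap (hcont.measurable.const_mul _).aemeasurable
    _ = ∫⁻ _ in Ioc (0 : ℝ) 1, ‖h‖ₑ * ∫⁻ p, ‖fderiv ℝ f p‖ₑ ∂μ := by
        refine lintegral_congr fun θ => ?_
        rw [lintegral_const_mul' _ _ enorm_ne_top,
          lintegral_add_right_eq_self (fun p => ‖fderiv ℝ f p‖ₑ) (θ • h)]
    _ = ‖h‖ₑ * ∫⁻ p, ‖fderiv ℝ f p‖ₑ ∂μ := by simp

theorem lintegral_enorm_fwdDiff_fwdDiff_le (hf : ContDiff ℝ 2 f) (h k : V) :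
    ∫⁻ p, ‖Δ_[k] (Δ_[h] f) p‖ₑ ∂μ ≤
      ‖k‖ₑ * (‖h‖ₑ * ∫⁻ p, ‖fderiv ℝ (fderiv ℝ f) p‖ₑ ∂μ) := by
  refine (lintegral_enorm_fwdDiff_le (contDiff_fwdDiff (hf.of_le one_le_two) h) k).trans ?_
  rw [fderiv_fwdDiff (hf.differentiable two_ne_zero)]
  gcongr
  exact lintegral_enorm_fwdDiff_le (hf.fderiv_right (by norm_num)) h

theorem integral_norm_fwdDiff_le (hf : Integrable f μ)
    (hf1 : ContDiff ℝ 1 f) (hf' : Integrable (fderiv ℝ f) μ) (h : V) :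
    ∫ p, ‖Δ_[h] f p‖ ∂μ ≤ min (2 * ∫ p, ‖f p‖ ∂μ) ((∫ p, ‖fderiv ℝ f p‖ ∂μ) * ‖h‖) := by
  refine le_min (integral_norm_fwdDiff_le_two_mul hf h) ?_
  rw [integral_norm_eq_lintegral_enorm (integrable_fwdDiff hf h).1,
    integral_norm_eq_lintegral_enorm hf'.1, mul_comm, ← toReal_enorm, ← ENNReal.toReal_mul]
  exact ENNReal.toReal_mono (ENNReal.mul_ne_top enorm_ne_top hf'.2.ne)
    (lintegral_enorm_fwdDiff_le hf1 h)

theorem integral_norm_fwdDiff_fwdDiff_neg_le (hf : Integrable f μ)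
    (hf2 : ContDiff ℝ 2 f) (hf'' : Integrable (fderiv ℝ (fderiv ℝ f)) μ) (h : V) :
    ∫ p, ‖Δ_[h] (Δ_[-h] f) p‖ ∂μ ≤
      min (4 * ∫ p, ‖f p‖ ∂μ) ((∫ p, ‖fderiv ℝ (fderiv ℝ f) p‖ ∂μ) * ‖h‖ ^ 2) := by
  have hint := integrable_fwdDiff hf (-h)
  refine le_min ?_ ?_
  · linarith [integral_norm_fwdDiff_le_two_mul hf (-h), integral_norm_fwdDiff_le_two_mul hint h]
  · rw [integral_norm_eq_lintegral_enorm (integrable_fwdDiff hint h).1,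
      integral_norm_eq_lintegral_enorm hf''.1, mul_comm, pow_two, mul_assoc, ← toReal_enorm,
      ← ENNReal.toReal_mul, ← ENNReal.toReal_mul]
    have hle := lintegral_enorm_fwdDiff_fwdDiff_le (μ := μ) hf2 (-h) h
    rw [enorm_neg] at hle
    exact ENNReal.toReal_mono
      (ENNReal.mul_ne_top enorm_ne_top (ENNReal.mul_ne_top enorm_ne_top hf''.2.ne)) hle

end DifferenceEstimates

section SingularKernel

theorem integrableOn_min_mul_rpow {k β : ℝ} (hβ : 0 < β) (hk : β < k) {A B : ℝ} (hA : 0 ≤ A)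
    (hB : 0 ≤ B) : IntegrableOn (fun r : ℝ => min A (B * r ^ k) * r ^ (-1 - β)) (Ioi 0) := by
  have hmeas : Measurable (fun r : ℝ => min A (B * r ^ k) * r ^ (-1 - β)) := by fun_prop
  have hnear : IntegrableOn (fun r : ℝ => B * r ^ (k - 1 - β)) (Ioc 0 1) :=
    (intervalIntegral.intervalIntegrable_rpow' (a := 0) (b := 1) (by linarith)).1.const_mul B
  have hfar : IntegrableOn (fun r : ℝ => A * r ^ (-1 - β)) (Ioi 1) :=
    (integrableOn_Ioi_rpow_of_lt (by linarith) one_pos).const_mul A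
  rw [← Ioc_union_Ioi_eq_Ioi (zero_le_one' ℝ)]
  refine IntegrableOn.union (hnear.mono' hmeas.aestronglyMeasurable ?_)
    (hfar.mono' hmeas.aestronglyMeasurable ?_)
  · filter_upwards [ae_restrict_mem measurableSet_Ioc] with r ⟨hr, _⟩
    rw [Real.norm_of_nonneg (by positivity)]
    calc min A (B * r ^ k) * r ^ (-1 - β) ≤ B * r ^ k * r ^ (-1 - β) := by
          gcongr; exact min_le_right _ _
      _ = B * r ^ (k - 1 - β) := by rw [mul_assoc, ← Real.rpow_add hr]; ring_nf
  · filter_upwards [ae_restrict_mem measurableSet_Ioi] with r hr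
    have hr0 : 0 < r := zero_lt_one.trans hr
    rw [Real.norm_of_nonneg (by positivity)]
    gcongr
    exact min_le_left _ _

theorem integrable_min_mul_norm_rpow {E : Type*} [NormedAddCommGroup E] [NormedSpace ℝ E]
    [Nontrivial E] [FiniteDimensional ℝ E] [MeasurableSpace E] [BorelSpace E] (μ : Measure E)
    [μ.IsAddHaarMeasure] {k β : ℝ} (hβ : 0 < β) (hk : β < k) {A B : ℝ} (hA : 0 ≤ A) (hB : 0 ≤ B) :
    Integrable (fun y : E => min A (B * ‖y‖ ^ k) * ‖y‖ ^ (-(finrank ℝ E + β))) μ := by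
  rw [integrable_fun_norm_addHaar μ
    (f := fun r : ℝ => min A (B * r ^ k) * r ^ (-(finrank ℝ E + β)))]
  refine (integrableOn_min_mul_rpow hβ hk hA hB).congr_fun (fun r hr => ?_) measurableSet_Ioi
  have hpow : r ^ (finrank ℝ E - 1) * r ^ (-(finrank ℝ E + β)) = r ^ (-1 - β) := by
    rw [← Real.rpow_natCast, ← Real.rpow_add hr, Nat.cast_sub finrank_pos]
    ring_nf
  rw [smul_eq_mul, mul_left_comm, hpow]

theorem integrable_prod_smul_of_integral_norm_le {X Y F : Type*} [MeasurableSpace X]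
    [MeasurableSpace Y] [NormedAddCommGroup F] [NormedSpace ℝ F] {μ : Measure X} {ν : Measure Y}
    [SFinite μ] [SFinite ν] {k b : Y → ℝ} {T : Y → X → F}
    (hmeas : AEStronglyMeasurable (fun q : X × Y => k q.2 • T q.2 q.1) (μ.prod ν))
    (hT : ∀ y, Integrable (T y) μ) (hle : ∀ y, ∫ x, ‖T y x‖ ∂μ ≤ b y)
    (hb : Integrable (fun y => b y * |k y|) ν) :
    Integrable (fun q : X × Y => k q.2 • T q.2 q.1) (μ.prod ν) := by
  refine (integrable_prod_iff' hmeas).2 ⟨Eventually.of_forall fun y => (hT y).smul (k y), ?_⟩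
  refine hb.mono' hmeas.norm.prod_swap.integral_prod_right' (Eventually.of_forall fun y => ?_)
  rw [Real.norm_of_nonneg (by positivity)]
  simp only [norm_smul, integral_const_mul, Real.norm_eq_abs]
  rw [mul_comm]
  gcongr
  exact hle y

end SingularKernel

section RegularizedGammaIntegral

variable {α : ℝ}

theorem neg_mul_Gamma_neg (h0 : 0 < α) : -α * Real.Gamma (-α) = Real.Gamma (1 - α) := by
  rw [← Real.Gamma_add_one (by linarith), neg_add_eq_sub]

theorem Gamma_neg_lt_zero (h0 : 0 < α) (h1 : α < 1) : Real.Gamma (-α) < 0 := by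
  have hpos : 0 < Real.Gamma (1 - α) := Real.Gamma_pos_of_pos (by linarith)
  rw [← neg_mul_Gamma_neg h0] at hpos
  nlinarith

theorem norm_cexp_sub_one_le {z : ℂ} (hz : z.re ≤ 0) :
    ‖Complex.exp z - 1‖ ≤ min 2 (2 * ‖z‖) := by
  have h2 : ‖Complex.exp z - 1‖ ≤ 2 := by
    refine (norm_sub_le _ _).trans ?_
    rw [norm_one, Complex.norm_exp]
    linarith [Real.exp_le_one_iff.2 hz]
  refine le_min h2 ?_
  rcases le_total ‖z‖ 1 with h | h
  · exact Complex.norm_exp_sub_one_le h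
  · linarith

theorem norm_rpow_smul_cexp_sub_one_le {z : ℂ} (hz : 0 ≤ z.re) {r : ℝ} (hr : 0 < r) :
    ‖r ^ (-1 - α) • (Complex.exp (-(z * r)) - 1)‖ ≤
      min 2 (2 * ‖z‖ * r ^ (1 : ℝ)) * r ^ (-1 - α) := by
  have hre : (-(z * r)).re ≤ 0 := by simpa using mul_nonneg hz hr.le
  rw [norm_smul, Real.norm_of_nonneg (by positivity), mul_comm]
  gcongr
  simpa [abs_of_pos hr, mul_assoc] using norm_cexp_sub_one_le hre

theorem integrableOn_rpow_smul_cexp_sub_one (h0 : 0 < α) (h1 : α < 1) {z : ℂ} (hz : 0 ≤ z.re) :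
    IntegrableOn (fun r : ℝ => r ^ (-1 - α) • (Complex.exp (-(z * r)) - 1)) (Ioi 0) := by
  refine (integrableOn_min_mul_rpow h0 h1 zero_le_two (by positivity : 0 ≤ 2 * ‖z‖)).mono'
    (by fun_prop) ?_
  filter_upwards [ae_restrict_mem measurableSet_Ioi] with r hr
  exact norm_rpow_smul_cexp_sub_one_le hz hr

theorem integrableOn_rpow_mul_exp_sub_one (h0 : 0 < α) (h1 : α < 1) {x : ℝ} (hx : 0 ≤ x) :
    IntegrableOn (fun r : ℝ => r ^ (-1 - α) * (Real.exp (-(x * r)) - 1)) (Ioi 0) := by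
  have hre := (integrableOn_rpow_smul_cexp_sub_one h0 h1 (z := x) (by simpa)).re
  refine hre.congr (Eventually.of_forall fun r => ?_)
  simp [← Complex.ofReal_mul, ← Complex.ofReal_neg, Complex.exp_ofReal_re]

theorem tendsto_exp_sub_one_mul_rpow_neg_nhdsGT_zero (h1 : α < 1) (x : ℝ) :
    Tendsto (fun r : ℝ => (Real.exp (-(x * r)) - 1) * r ^ (-α)) (𝓝[>] 0) (𝓝 0) := by
  have hslope : Tendsto (fun r : ℝ => r⁻¹ * (Real.exp (-(x * r)) - 1)) (𝓝[>] 0) (𝓝 (-x)) := by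
    have hderiv : HasDerivAt (fun r : ℝ => Real.exp (-(x * r))) (-x) 0 := by
      simpa using ((hasDerivAt_id (0 : ℝ)).const_mul x).neg.exp
    simpa using hderiv.tendsto_slope_zero_right
  have hpow : Tendsto (fun r : ℝ => r ^ (1 - α)) (𝓝[>] 0) (𝓝 0) := by
    have hcont := Real.continuousAt_rpow_const 0 (1 - α) (Or.inr (by linarith))
    simpa [Real.zero_rpow (sub_pos.2 h1).ne'] using hcont.tendsto.mono_left nhdsWithin_le_nhds
  refine (mul_zero (-x) ▸ hslope.mul hpow).congr' ?_
  filter_upwards [self_mem_nhdsWithin] with r hr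
  rw [sub_eq_add_neg 1 α, Real.rpow_add hr, Real.rpow_one]
  field_simp [(show r ≠ 0 from ne_of_gt hr)]

theorem tendsto_exp_sub_one_mul_rpow_neg_atTop (h0 : 0 < α) {x : ℝ} (hx : 0 < x) :
    Tendsto (fun r : ℝ => (Real.exp (-(x * r)) - 1) * r ^ (-α)) atTop (𝓝 0) := by
  have hexp : Tendsto (fun r : ℝ => Real.exp (-(x * r))) atTop (𝓝 0) :=
    Real.tendsto_exp_neg_atTop_nhds_zero.comp (tendsto_id.const_mul_atTop hx)
  simpa using (hexp.sub_const 1).mul (tendsto_rpow_neg_atTop h0)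

theorem integral_rpow_mul_exp_sub_one (h0 : 0 < α) (h1 : α < 1) {x : ℝ} (hx : 0 ≤ x) :
    ∫ r in Ioi (0 : ℝ), r ^ (-1 - α) * (Real.exp (-(x * r)) - 1) = Real.Gamma (-α) * x ^ α := by
  rcases hx.eq_or_lt with rfl | hx
  · simp [Real.zero_rpow h0.ne']
  have hu (r : ℝ) : HasDerivAt (fun r => Real.exp (-(x * r)) - 1) (-x * Real.exp (-(x * r))) r := by
    simpa [mul_comm] using (((hasDerivAt_id r).const_mul x).neg.exp).sub_const 1
  have hv (r : ℝ) (hr : r ∈ Ioi 0) : HasDerivAt (fun r => r ^ (-α)) (-α * r ^ (-1 - α)) r := by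
    simpa [sub_eq_add_neg, add_comm] using
      Real.hasDerivAt_rpow_const (p := -α) (Or.inl (ne_of_gt hr))
  have hGamma : ∫ r in Ioi (0 : ℝ), r ^ (-α) * Real.exp (-(x * r)) =
      x ^ (α - 1) * Real.Gamma (1 - α) := by
    have := Real.integral_rpow_mul_exp_neg_mul_Ioi (a := 1 - α) (by linarith) hx
    rwa [one_div, Real.inv_rpow hx.le, ← Real.rpow_neg hx.le, neg_sub, sub_sub_cancel_left] at this
  have hint : IntegrableOn (fun r : ℝ => r ^ (-α) * Real.exp (-(x * r))) (Ioi 0) := by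
    simpa using integrableOn_rpow_mul_exp_neg_mul_rpow (by linarith : -1 < -α) one_pos hx
  have hparts := integral_Ioi_mul_deriv_eq_deriv_mul (fun r _ => hu r) hv
    (((integrableOn_rpow_mul_exp_sub_one h0 h1 hx.le).const_mul (-α)).congr
      (Eventually.of_forall fun r => by simp only [Pi.mul_apply]; ring))
    ((hint.const_mul (-x)).congr
      (Eventually.of_forall fun r => by simp only [Pi.mul_apply]; ring))
    (tendsto_exp_sub_one_mul_rpow_neg_nhdsGT_zero h1 x)
    (tendsto_exp_sub_one_mul_rpow_neg_atTop h0 hx)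
  have hleft (r : ℝ) : (Real.exp (-(x * r)) - 1) * (-α * r ^ (-1 - α)) =
      -α * (r ^ (-1 - α) * (Real.exp (-(x * r)) - 1)) := by ring
  have hright (r : ℝ) : -x * Real.exp (-(x * r)) * r ^ (-α) =
      -x * (r ^ (-α) * Real.exp (-(x * r))) := by ring
  simp only [hleft, hright, integral_const_mul, hGamma, ← neg_mul_Gamma_neg h0] at hparts
  have hpow : x * x ^ (α - 1) = x ^ α := by
    rw [← Real.rpow_one_add' hx.le (by linarith), add_sub_cancel]
  refine mul_left_cancel₀ (neg_ne_zero.2 h0.ne') (hparts.trans ?_)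
  rw [← hpow]
  ring

theorem differentiableAt_integral_rpow_smul_cexp_sub_one (h0 : 0 < α) (h1 : α < 1) {z : ℂ}
    (hz : 0 < z.re) :
    DifferentiableAt ℂ (fun z : ℂ =>
      ∫ r in Ioi (0 : ℝ), r ^ (-1 - α) • (Complex.exp (-(z * r)) - 1)) z := by
  have hnhds : {w : ℂ | z.re / 2 < w.re} ∈ 𝓝 z :=
    (isOpen_lt continuous_const Complex.continuous_re).mem_nhds (half_lt_self hz)
  have hbound : IntegrableOn (fun r : ℝ => r ^ (-α) * Real.exp (-(z.re / 2 * r))) (Ioi 0) := by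
    simpa using integrableOn_rpow_mul_exp_neg_mul_rpow (by linarith : -1 < -α) one_pos (half_pos hz)
  refine (hasDerivAt_integral_of_dominated_loc_of_deriv_le
    (F := fun (w : ℂ) (r : ℝ) => r ^ (-1 - α) • (Complex.exp (-(w * r)) - 1))
    (F' := fun (w : ℂ) (r : ℝ) => r ^ (-1 - α) • (-r * Complex.exp (-(w * r)))) hnhds
    (Eventually.of_forall fun w => by fun_prop)
    (integrableOn_rpow_smul_cexp_sub_one h0 h1 hz.le) (by fun_prop) ?_ hbound
    (Eventually.of_forall fun r w _ => ?_)).2.differentiableAt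
  · filter_upwards [ae_restrict_mem measurableSet_Ioi] with r (hr : 0 < r) w hw
    have hpow : r ^ (-α) = r ^ (-1 - α) * r := by
      rw [← Real.rpow_add_one hr.ne']; ring_nf
    have hre : (-(w * r)).re ≤ -(z.re / 2 * r) := by
      simpa using mul_le_mul_of_nonneg_right (le_of_lt hw) hr.le
    rw [norm_smul, norm_mul, norm_neg, Complex.norm_real, Complex.norm_exp,
      Real.norm_of_nonneg hr.le, Real.norm_of_nonneg (by positivity), hpow, mul_assoc]
    gcongr
  · have hexp := ((hasDerivAt_mul_const (x := w) (r : ℂ)).neg.cexp.sub_const 1).const_smul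
      (r ^ (-1 - α))
    exact hexp.congr_deriv (by simp [mul_comm])

theorem continuousOn_integral_rpow_smul_cexp_sub_one (h0 : 0 < α) (h1 : α < 1) :
    ContinuousOn (fun z : ℂ => ∫ r in Ioi (0 : ℝ), r ^ (-1 - α) • (Complex.exp (-(z * r)) - 1))
      {z | 0 ≤ z.re} := by
  intro z _
  refine continuousWithinAt_of_dominated
    (bound := fun r => min 2 (2 * (‖z‖ + 1) * r ^ (1 : ℝ)) * r ^ (-1 - α))
    (Eventually.of_forall fun w => by fun_prop) ?_
    (integrableOn_min_mul_rpow h0 h1 zero_le_two (by positivity))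
    (Eventually.of_forall fun r => by fun_prop)
  have hnorm : ∀ᶠ w in 𝓝[{z : ℂ | 0 ≤ z.re}] z, ‖w‖ < ‖z‖ + 1 :=
    nhdsWithin_le_nhds (continuous_norm.continuousAt.eventually_lt_const (lt_add_one _))
  filter_upwards [hnorm, self_mem_nhdsWithin] with w hw hre
  filter_upwards [ae_restrict_mem measurableSet_Ioi] with r (hr : 0 < r)
  refine (norm_rpow_smul_cexp_sub_one_le hre hr).trans ?_
  gcongr

theorem integral_rpow_smul_cexp_sub_one_of_re_pos (h0 : 0 < α) (h1 : α < 1) :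
    EqOn (fun z : ℂ => ∫ r in Ioi (0 : ℝ), r ^ (-1 - α) • (Complex.exp (-(z * r)) - 1))
      (fun z => Real.Gamma (-α) * z ^ (α : ℂ)) {z | 0 < z.re} := by
  have hopen : IsOpen {w : ℂ | 0 < w.re} := isOpen_lt continuous_const Complex.continuous_re
  have hreal (x : ℝ) (hx : 0 < x) :
      ∫ r in Ioi (0 : ℝ), r ^ (-1 - α) • (Complex.exp (-((x : ℂ) * r)) - 1) =
        Real.Gamma (-α) * (x : ℂ) ^ (α : ℂ) := by
    rw [← Complex.ofReal_cpow hx.le, ← Complex.ofReal_mul,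
      ← integral_rpow_mul_exp_sub_one h0 h1 hx.le, ← integral_complex_ofReal]
    push_cast
    simp only [Complex.real_smul]
  have hones : Tendsto (fun x : ℝ => (x : ℂ)) (𝓝[>] 1) (𝓝[≠] 1) :=
    (Complex.continuous_ofReal.tendsto' 1 1 Complex.ofReal_one).inf
      (tendsto_principal_principal.2 fun x hx => by simpa using ne_of_gt hx)
  refine AnalyticOnNhd.eqOn_of_preconnected_of_frequently_eq (z₀ := 1)
    (DifferentiableOn.analyticOnNhd (fun z hz =>
      (differentiableAt_integral_rpow_smul_cexp_sub_one h0 h1 hz).differentiableWithinAt) hopen)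
    (DifferentiableOn.analyticOnNhd (fun z hz =>
      ((differentiableAt_id.cpow_const (Or.inl hz)).const_mul _).differentiableWithinAt) hopen)
    (convex_halfSpace_re_gt 0).isPreconnected (by simp)
    (hones.frequently (Eventually.frequently ?_))
  filter_upwards [self_mem_nhdsWithin] with x hx
  exact hreal x (zero_lt_one.trans hx)

theorem integral_rpow_smul_cexp_sub_one (h0 : 0 < α) (h1 : α < 1) {z : ℂ} (hz : 0 ≤ z.re) :
    ∫ r in Ioi (0 : ℝ), r ^ (-1 - α) • (Complex.exp (-(z * r)) - 1) =
      Real.Gamma (-α) * z ^ (α : ℂ) := by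
  have hcpow : ContinuousOn (fun z : ℂ => Real.Gamma (-α) * z ^ (α : ℂ)) {z | 0 ≤ z.re} :=
    fun w hw =>
      ((Complex.continuousAt_cpow_const_of_re_pos (Or.inl hw)
        (by simpa using h0)).const_mul _).continuousWithinAt
  exact (integral_rpow_smul_cexp_sub_one_of_re_pos h0 h1).of_subset_closure
    (continuousOn_integral_rpow_smul_cexp_sub_one h0 h1) hcpow (fun w (hw : 0 < w.re) => hw.le)
    (Complex.closure_setOfPred_lt_re 0).ge hz

end RegularizedGammaIntegral

section HeatSubordination

theorem integral_rpow_mul_exp_neg_div {a c : ℝ} (ha : 0 < a) (hc : 0 < c) :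
    ∫ r in Ioi (0 : ℝ), r ^ (-1 - a) * Real.exp (-(c / r)) = Real.Gamma a * c ^ (-a) := by
  have hGamma := Real.integral_rpow_mul_exp_neg_mul_Ioi ha hc
  rw [← integral_comp_rpow_Ioi _ (neg_ne_zero.2 one_ne_zero : (-1 : ℝ) ≠ 0), one_div,
    Real.inv_rpow hc.le, ← Real.rpow_neg hc.le, mul_comm (c ^ (-a))] at hGamma
  refine (setIntegral_congr_fun measurableSet_Ioi fun r (hr : 0 < r) => ?_).trans hGamma
  have hpow : r ^ ((-1 : ℝ) - 1) * (r ^ (-1 : ℝ)) ^ (a - 1) = r ^ (-1 - a) := by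
    rw [← Real.rpow_mul hr.le, ← Real.rpow_add hr]
    ring_nf
  simp only [abs_neg, abs_one, one_mul, smul_eq_mul]
  rw [← mul_assoc, hpow, Real.rpow_neg_one, div_eq_mul_inv]

variable {E : Type*} [NormedAddCommGroup E] [InnerProductSpace ℝ E]

theorem one_sub_cos_mul_exp_eq_re {b : ℝ} (ξ y : E) :
    (1 - Real.cos (inner ℝ ξ y)) * Real.exp (-b * ‖y‖ ^ 2) =
      RCLike.re (Complex.exp (-(b : ℂ) * ‖y‖ ^ 2 + 0 * (inner ℝ ξ y : ℝ)) -
        Complex.exp (-(b : ℂ) * ‖y‖ ^ 2 + Complex.I * (inner ℝ ξ y : ℝ))) := by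
  have h : -(b : ℂ) * ‖y‖ ^ 2 = ((-b * ‖y‖ ^ 2 : ℝ) : ℂ) := by push_cast; rfl
  rw [h]
  generalize -b * ‖y‖ ^ 2 = a
  simp [Complex.exp_re]
  ring

theorem integral_rpow_mul_one_sub_cos_mul_exp_neg_div {s : ℝ} (h0 : 0 < s) (ξ y : E) :
    ∫ r in Ioi (0 : ℝ), r ^ (-1 - ((finrank ℝ E : ℝ) / 2 + s)) *
        ((1 - Real.cos (inner ℝ ξ y)) * Real.exp (-(‖y‖ ^ 2 / 4 / r))) =
      4 ^ ((finrank ℝ E : ℝ) / 2 + s) * Real.Gamma ((finrank ℝ E : ℝ) / 2 + s) *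
        (‖y‖ ^ (-(finrank ℝ E + 2 * s)) * (1 - Real.cos (inner ℝ ξ y))) := by
  rcases eq_or_ne y 0 with rfl | hy
  · simp
  have hy' : 0 < ‖y‖ := norm_pos_iff.2 hy
  have hpow : (‖y‖ ^ 2 / 4) ^ (-((finrank ℝ E : ℝ) / 2 + s)) =
      4 ^ ((finrank ℝ E : ℝ) / 2 + s) * ‖y‖ ^ (-(finrank ℝ E + 2 * s)) := by
    rw [Real.div_rpow (by positivity) (by norm_num), ← Real.rpow_natCast, ← Real.rpow_mul hy'.le,
      Real.rpow_neg (by norm_num : (0 : ℝ) ≤ 4), div_inv_eq_mul, mul_comm]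
    congr 2
    push_cast
    ring
  simp only [mul_left_comm _ (1 - Real.cos (inner ℝ ξ y)), integral_const_mul]
  rw [integral_rpow_mul_exp_neg_div (by positivity) (by positivity), hpow]
  ring

variable [FiniteDimensional ℝ E] [MeasurableSpace E] [BorelSpace E]

theorem integrable_one_sub_cos_mul_exp (ξ : E) {b : ℝ} (hb : 0 < b) :
    Integrable fun y : E => (1 - Real.cos (inner ℝ ξ y)) * Real.exp (-b * ‖y‖ ^ 2) := by
  have hb' : 0 < (b : ℂ).re := hb
  simp_rw [one_sub_cos_mul_exp_eq_re]
  exact ((GaussianFourier.integrable_cexp_neg_mul_sq_norm_add hb' 0 ξ).sub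
    (GaussianFourier.integrable_cexp_neg_mul_sq_norm_add hb' Complex.I ξ)).re

theorem integral_one_sub_cos_mul_exp (ξ : E) {b : ℝ} (hb : 0 < b) :
    ∫ y : E, (1 - Real.cos (inner ℝ ξ y)) * Real.exp (-b * ‖y‖ ^ 2) =
      (Real.pi / b) ^ ((finrank ℝ E : ℝ) / 2) * (1 - Real.exp (-(‖ξ‖ ^ 2 / (4 * b)))) := by
  have hb' : 0 < (b : ℂ).re := hb
  have hone := GaussianFourier.integrable_cexp_neg_mul_sq_norm_add hb' 0 ξ
  have hcos := GaussianFourier.integrable_cexp_neg_mul_sq_norm_add hb' Complex.I ξ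
  simp_rw [one_sub_cos_mul_exp_eq_re]
  refine (integral_re (hone.sub hcos)).trans ?_
  rw [← RCLike.ofReal_re (K := ℂ) (_ * (1 - Real.exp _)), integral_sub' hone hcos,
    GaussianFourier.integral_cexp_neg_mul_sq_norm_add hb',
    GaussianFourier.integral_cexp_neg_mul_sq_norm_add hb', ← mul_sub]
  congr 1
  simp [Complex.ofReal_cpow (show 0 ≤ Real.pi / b by positivity), neg_div]

theorem integrable_one_sub_cos_mul_heatKernel (ξ : E) {r : ℝ} (hr : 0 < r) :
    Integrable fun y : E => (1 - Real.cos (inner ℝ ξ y)) * Real.exp (-(‖y‖ ^ 2 / 4 / r)) := by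
  convert integrable_one_sub_cos_mul_exp ξ (b := 1 / (4 * r)) (by positivity) using 4
  field_simp

theorem integral_one_sub_cos_mul_heatKernel (ξ : E) {r : ℝ} (hr : 0 < r) :
    ∫ y : E, (1 - Real.cos (inner ℝ ξ y)) * Real.exp (-(‖y‖ ^ 2 / 4 / r)) =
      (4 * Real.pi * r) ^ ((finrank ℝ E : ℝ) / 2) * (1 - Real.exp (-(‖ξ‖ ^ 2 * r))) := by
  convert integral_one_sub_cos_mul_exp ξ (b := 1 / (4 * r)) (by positivity) using 5 <;> field_simp

theorem integral_rpow_mul_one_sub_cos_mul_heatKernel (s : ℝ) (ξ : E) {r : ℝ} (hr : 0 < r) :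
    ∫ y : E, r ^ (-1 - ((finrank ℝ E : ℝ) / 2 + s)) *
        ((1 - Real.cos (inner ℝ ξ y)) * Real.exp (-(‖y‖ ^ 2 / 4 / r))) =
      -(4 * Real.pi) ^ ((finrank ℝ E : ℝ) / 2) *
        (r ^ (-1 - s) * (Real.exp (-(‖ξ‖ ^ 2 * r)) - 1)) := by
  have hpow : r ^ (-1 - ((finrank ℝ E : ℝ) / 2 + s)) * r ^ ((finrank ℝ E : ℝ) / 2) =
      r ^ (-1 - s) := by
    rw [← Real.rpow_add hr]
    ring_nf
  rw [integral_const_mul, integral_one_sub_cos_mul_heatKernel ξ hr,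
    Real.mul_rpow (by positivity) hr.le, ← hpow]
  ring

theorem integrable_prod_one_sub_cos_mul_heatKernel {s : ℝ} (h0 : 0 < s) (h1 : s < 1) (ξ : E) :
    Integrable (fun q : E × ℝ => q.2 ^ (-1 - ((finrank ℝ E : ℝ) / 2 + s)) *
      ((1 - Real.cos (inner ℝ ξ q.1)) * Real.exp (-(‖q.1‖ ^ 2 / 4 / q.2))))
      (volume.prod (volume.restrict (Ioi 0))) := by
  refine (integrable_prod_iff' (by fun_prop)).2 ⟨?_, ?_⟩
  · filter_upwards [ae_restrict_mem measurableSet_Ioi] with r hr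
    exact (integrable_one_sub_cos_mul_heatKernel ξ hr).const_mul _
  · refine ((integrableOn_rpow_mul_exp_sub_one h0 h1 (sq_nonneg ‖ξ‖)).const_mul
      (-(4 * Real.pi) ^ ((finrank ℝ E : ℝ) / 2))).congr ?_
    filter_upwards [ae_restrict_mem measurableSet_Ioi] with r (hr : 0 < r)
    rw [← integral_rpow_mul_one_sub_cos_mul_heatKernel s ξ hr]
    refine integral_congr_ae (Eventually.of_forall fun y => (Real.norm_of_nonneg ?_).symm)
    have hcos : 0 ≤ 1 - Real.cos (inner ℝ ξ y) := sub_nonneg.2 (Real.cos_le_one _)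
    positivity

theorem Gamma_mul_integral_norm_rpow_mul_one_sub_cos {s : ℝ} (h0 : 0 < s) (h1 : s < 1) (ξ : E) :
    4 ^ s * Real.Gamma ((finrank ℝ E : ℝ) / 2 + s) *
        ∫ y : E, ‖y‖ ^ (-(finrank ℝ E + 2 * s)) * (1 - Real.cos (inner ℝ ξ y)) =
      Real.pi ^ ((finrank ℝ E : ℝ) / 2) * -Real.Gamma (-s) * ‖ξ‖ ^ (2 * s) := by
  -- Integrating `r ^ (-1 - (d / 2 + s)) * (1 - cos ⟪ξ, y⟫) * exp (-‖y‖ ^ 2 / (4 * r))` over `r`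
  -- first produces the power of `‖y‖`, over `y` first the integral defining `Γ(-s) ‖ξ‖ ^ (2 * s)`.
  have hswap := integral_integral_swap
    (f := fun (y : E) (r : ℝ) => r ^ (-1 - ((finrank ℝ E : ℝ) / 2 + s)) *
      ((1 - Real.cos (inner ℝ ξ y)) * Real.exp (-(‖y‖ ^ 2 / 4 / r))))
    (integrable_prod_one_sub_cos_mul_heatKernel h0 h1 ξ)
  rw [setIntegral_congr_fun (g := fun r => -(4 * Real.pi) ^ ((finrank ℝ E : ℝ) / 2) *
      (r ^ (-1 - s) * (Real.exp (-(‖ξ‖ ^ 2 * r)) - 1))) measurableSet_Ioi fun r hr =>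
      integral_rpow_mul_one_sub_cos_mul_heatKernel s ξ hr] at hswap
  simp only [integral_rpow_mul_one_sub_cos_mul_exp_neg_div h0, integral_const_mul] at hswap
  rw [integral_rpow_mul_exp_sub_one h0 h1 (sq_nonneg _), ← Real.rpow_natCast,
    ← Real.rpow_mul (norm_nonneg _), Nat.cast_ofNat, Real.rpow_add (by norm_num),
    Real.mul_rpow (by norm_num) Real.pi_nonneg] at hswap
  have h4 : (0 : ℝ) < 4 ^ ((finrank ℝ E : ℝ) / 2) := by positivity
  refine mul_left_cancel₀ h4.ne' ?_
  linear_combination hswap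

theorem Cns_mul_integral_norm_rpow_mul_one_sub_cos {s : ℝ} (h0 : 0 < s) (h1 : s < 1) (ξ : E) :
    Cns (finrank ℝ E) s * ∫ y : E, ‖y‖ ^ (-(finrank ℝ E + 2 * s)) * (1 - Real.cos (inner ℝ ξ y)) =
      ‖ξ‖ ^ (2 * s) := by
  have hGamma : -Real.Gamma (-s) ≠ 0 := neg_ne_zero.2 (Gamma_neg_lt_zero h0 h1).ne
  rw [Cns, abs_of_neg (Gamma_neg_lt_zero h0 h1), div_mul_eq_mul_div,
    Gamma_mul_integral_norm_rpow_mul_one_sub_cos h0 h1, mul_div_cancel_left₀]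
  positivity

end HeatSubordination

section SingularOperators

variable {V F : Type*} [NormedAddCommGroup V] [NormedSpace ℝ V] [NormedAddCommGroup F]
  [NormedSpace ℂ F] {E : Type*} [NormedAddCommGroup E] [InnerProductSpace ℝ E]

/-- The Marchaud derivative of order `α` in the direction `v`. Dividing by the negative number
`Γ(-α)`, rather than by its absolute value as in `Calpha`, turns `f p - f (p + r • v)` into a
forward difference. -/
noncomputable def directionalMarchaud (α : ℝ) (v : V) (f : V → F) (p : V) : F :=
  (Real.Gamma (-α))⁻¹ • ∫ r in Ioi (0 : ℝ), r ^ (-1 - α) • Δ_[r • v] f p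

/-- The fractional Laplacian of order `s` along the directions `ι y`, `y : E`. The integrand is
the second difference `2 f p - f (p + ι y) - f (p - ι y)`, written with forward differences. -/
noncomputable def fracLapAlong [FiniteDimensional ℝ E] [MeasurableSpace E] [BorelSpace E] (s : ℝ)
    (ι : E →L[ℝ] V) (f : V → F) (p : V) : F :=
  (Cns (finrank ℝ E) s / 2) •
    ∫ y : E, ‖y‖ ^ (-(finrank ℝ E + 2 * s)) • Δ_[ι y] (Δ_[-ι y] f) p

variable [MeasurableSpace V] [BorelSpace V] [SecondCountableTopology V] {μ : Measure V} [SFinite μ]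
  [μ.IsAddRightInvariant] [CompleteSpace F] {f : V → F} {α s : ℝ}

theorem integrable_prod_rpow_smul_fwdDiff (h0 : 0 < α) (h1 : α < 1) (hf : Integrable f μ)
    (hf1 : ContDiff ℝ 1 f) (hf' : Integrable (fderiv ℝ f) μ) (v : V) :
    Integrable (fun q : V × ℝ => q.2 ^ (-1 - α) • Δ_[q.2 • v] f q.1)
      (μ.prod (volume.restrict (Ioi 0))) := by
  have hcont : Continuous fun q : V × ℝ => Δ_[q.2 • v] f q.1 := by
    have := hf1.continuous
    unfold fwdDiff
    fun_prop
  refine integrable_prod_smul_of_integral_norm_le (k := fun r => r ^ (-1 - α))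
    (T := fun r => Δ_[r • v] f) ?_ (fun r => integrable_fwdDiff hf _)
    (fun r => integral_norm_fwdDiff_le hf hf1 hf' _) ?_
  · have hker : Measurable fun q : V × ℝ => q.2 ^ (-1 - α) := by fun_prop
    exact hker.aestronglyMeasurable.smul hcont.aestronglyMeasurable
  · refine (integrableOn_min_mul_rpow (A := 2 * ∫ p, ‖f p‖ ∂μ)
      (B := (∫ p, ‖fderiv ℝ f p‖ ∂μ) * ‖v‖) h0 h1 (by positivity) (by positivity)).congr_fun
      (fun r (hr : 0 < r) => ?_) measurableSet_Ioi
    simp only [norm_smul, Real.norm_of_nonneg hr.le, abs_of_pos (Real.rpow_pos_of_pos hr _),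
      Real.rpow_one]
    ring_nf

theorem integrable_directionalMarchaud (h0 : 0 < α) (h1 : α < 1) (hf : Integrable f μ)
    (hf1 : ContDiff ℝ 1 f) (hf' : Integrable (fderiv ℝ f) μ) (v : V) :
    Integrable (directionalMarchaud α v f) μ :=
  (integrable_prod_rpow_smul_fwdDiff h0 h1 hf hf1 hf' v).integral_prod_left.smul _

variable {W : Type*} [AddCommGroup W] [Module ℝ W] [TopologicalSpace W] {L : V →ₗ[ℝ] W →ₗ[ℝ] ℝ}

theorem fourierIntegral_directionalMarchaud (h0 : 0 < α) (h1 : α < 1)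
    (hL : Continuous fun p : V × W => L p.1 p.2) (hf : Integrable f μ) (hf1 : ContDiff ℝ 1 f)
    (hf' : Integrable (fderiv ℝ f) μ) (v : V) (w : W) :
    VectorFourier.fourierIntegral Real.probChar μ L (directionalMarchaud α v f) w =
      (-(Complex.I * L v w)) ^ (α : ℂ) • VectorFourier.fourierIntegral Real.probChar μ L f w := by
  have hsymbol (r : ℝ) : VectorFourier.fourierIntegral Real.probChar μ L (Δ_[r • v] f) w =
      (Complex.exp (-(-(Complex.I * L v w) * r)) - 1) •
        VectorFourier.fourierIntegral Real.probChar μ L f w := by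
    rw [fourierIntegral_fwdDiff Real.continuous_probChar hL hf, Real.probChar_apply]
    congr 3
    simp
    ring
  have hGamma : (Real.Gamma (-α) : ℂ) ≠ 0 := Complex.ofReal_ne_zero.2 (Gamma_neg_lt_zero h0 h1).ne
  change VectorFourier.fourierIntegral _ _ _ ((((Real.Gamma (-α))⁻¹ : ℝ) : ℂ) • fun p =>
    ∫ r in Ioi (0 : ℝ), r ^ (-1 - α) • Δ_[r • v] f p) w = _
  rw [VectorFourier.fourierIntegral_const_smul, Pi.smul_apply,
    fourierIntegral_integral_smul Real.continuous_probChar hL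
      (integrable_prod_rpow_smul_fwdDiff h0 h1 hf hf1 hf' v) hsymbol,
    integral_rpow_smul_cexp_sub_one h0 h1 (by simp), smul_smul,
    Complex.ofReal_inv, inv_mul_cancel_left₀ hGamma]

variable [FiniteDimensional ℝ E] [MeasurableSpace E] [BorelSpace E]

theorem integrable_prod_norm_rpow_smul_fwdDiff_fwdDiff_neg [Nontrivial E] (h0 : 0 < s) (h1 : s < 1)
    (hf : Integrable f μ) (hf2 : ContDiff ℝ 2 f) (hf'' : Integrable (fderiv ℝ (fderiv ℝ f)) μ)
    (ι : E →L[ℝ] V) :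
    Integrable (fun q : V × E => ‖q.2‖ ^ (-(finrank ℝ E + 2 * s)) • Δ_[ι q.2] (Δ_[-ι q.2] f) q.1)
      (μ.prod volume) := by
  have hcont : Continuous fun q : V × E => Δ_[ι q.2] (Δ_[-ι q.2] f) q.1 := by
    have := hf2.continuous
    unfold fwdDiff
    fun_prop
  refine integrable_prod_smul_of_integral_norm_le
    (k := fun y => ‖y‖ ^ (-(finrank ℝ E + 2 * s))) (T := fun y => Δ_[ι y] (Δ_[-ι y] f))
    (b := fun y => min (4 * ∫ p, ‖f p‖ ∂μ)
      ((∫ p, ‖fderiv ℝ (fderiv ℝ f) p‖ ∂μ) * ‖ι‖ ^ 2 * ‖y‖ ^ (2 : ℝ))) ?_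
    (fun y => integrable_fwdDiff (integrable_fwdDiff hf _) _) (fun y => ?_) ?_
  · have hker : Measurable fun q : V × E => ‖q.2‖ ^ (-(finrank ℝ E + 2 * s)) := by fun_prop
    exact hker.aestronglyMeasurable.smul hcont.aestronglyMeasurable
  · refine (integral_norm_fwdDiff_fwdDiff_neg_le hf hf2 hf'' _).trans ?_
    rw [Real.rpow_two, mul_assoc, ← mul_pow]
    gcongr
    exact ι.le_opNorm y
  · simp_rw [abs_of_nonneg (Real.rpow_nonneg (norm_nonneg _) _)]
    exact integrable_min_mul_norm_rpow volume (by positivity) (by linarith) (by positivity)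
      (by positivity)

theorem integrable_fracLapAlong [Nontrivial E] (h0 : 0 < s) (h1 : s < 1) (hf : Integrable f μ)
    (hf2 : ContDiff ℝ 2 f) (hf'' : Integrable (fderiv ℝ (fderiv ℝ f)) μ) (ι : E →L[ℝ] V) :
    Integrable (fracLapAlong s ι f) μ :=
  (integrable_prod_norm_rpow_smul_fwdDiff_fwdDiff_neg h0 h1 hf hf2 hf'' ι).integral_prod_left.smul _

theorem fourierIntegral_fracLapAlong [Nontrivial E] (h0 : 0 < s) (h1 : s < 1)
    (hL : Continuous fun p : V × W => L p.1 p.2) (hf : Integrable f μ) (hf2 : ContDiff ℝ 2 f)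
    (hf'' : Integrable (fderiv ℝ (fderiv ℝ f)) μ) {ι : E →L[ℝ] V} {w : W} {ξ : E}
    (hξ : ∀ y, L (ι y) w = inner ℝ ξ y) :
    VectorFourier.fourierIntegral Real.probChar μ L (fracLapAlong s ι f) w =
      ((‖ξ‖ ^ (2 * s) : ℝ) : ℂ) • VectorFourier.fourierIntegral Real.probChar μ L f w := by
  have hsymbol (y : E) :
      VectorFourier.fourierIntegral Real.probChar μ L (Δ_[ι y] (Δ_[-ι y] f)) w =
        ((2 * (1 - Real.cos (inner ℝ ξ y)) : ℝ) : ℂ) •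
          VectorFourier.fourierIntegral Real.probChar μ L f w := by
    rw [fourierIntegral_fwdDiff_fwdDiff_neg hL hf, hξ]
  change VectorFourier.fourierIntegral _ _ _ (((Cns (finrank ℝ E) s / 2 : ℝ) : ℂ) • fun p =>
    ∫ y : E, ‖y‖ ^ (-(finrank ℝ E + 2 * s)) • Δ_[ι y] (Δ_[-ι y] f) p) w = _
  rw [VectorFourier.fourierIntegral_const_smul, Pi.smul_apply,
    fourierIntegral_integral_smul Real.continuous_probChar hL
      (integrable_prod_norm_rpow_smul_fwdDiff_fwdDiff_neg h0 h1 hf hf2 hf'' ι) hsymbol,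
    smul_smul, ← Cns_mul_integral_norm_rpow_mul_one_sub_cos h0 h1]
  congr 1
  simp only [Complex.real_smul, ← Complex.ofReal_mul, integral_complex_ofReal,
    mul_left_comm _ (2 : ℝ), integral_const_mul]
  push_cast
  ring

end SingularOperators

section SpaceTime

/-- The duality pairing `(x, t), (ξ, ρ) ↦ ⟪x, ξ⟫ + t ρ` of space-time with the frequency space. -/
noncomputable def spaceTimePairing (E : Type*) [NormedAddCommGroup E] [InnerProductSpace ℝ E] :
    E × ℝ →ₗ[ℝ] E × ℝ →ₗ[ℝ] ℝ :=
  (innerₗ E).compl₁₂ (LinearMap.fst ℝ E ℝ) (LinearMap.fst ℝ E ℝ) +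
    (LinearMap.mul ℝ ℝ).compl₁₂ (LinearMap.snd ℝ E ℝ) (LinearMap.snd ℝ E ℝ)

variable {E : Type*} [NormedAddCommGroup E] [InnerProductSpace ℝ E]

theorem spaceTimePairing_apply (p q : E × ℝ) :
    spaceTimePairing E p q = inner ℝ p.1 q.1 + p.2 * q.2 :=
  rfl

theorem continuous_spaceTimePairing :
    Continuous fun p : (E × ℝ) × (E × ℝ) => spaceTimePairing E p.1 p.2 := by
  simp only [spaceTimePairing_apply]
  fun_prop

variable {n : ℕ}

local notation "𝔼" => EuclideanSpace ℝ (Fin n)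

instance isAddHaarMeasure_volume_spaceTime : (volume : Measure (𝔼 × ℝ)).IsAddHaarMeasure :=
  inferInstanceAs (volume.prod volume).IsAddHaarMeasure

theorem fourierTrans_eq_fourierIntegral (f : 𝔼 × ℝ → ℂ) (ξ : 𝔼) (ρ : ℝ) :
    fourierTrans f ξ ρ = (((2 * Real.pi) ^ (-(((n : ℝ) + 1) / 2)) : ℝ) : ℂ) *
      VectorFourier.fourierIntegral Real.probChar volume (spaceTimePairing 𝔼) f (ξ, ρ) := by
  rw [fourierTrans, VectorFourier.fourierIntegral_probChar]
  congr 2 with p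
  rw [spaceTimePairing_apply, real_inner_comm, smul_eq_mul]
  congr 2
  push_cast
  ring

theorem marchaudRightC_eq_directionalMarchaud {α : ℝ} (h0 : 0 < α) (h1 : α < 1) (f : 𝔼 × ℝ → ℂ)
    (p : 𝔼 × ℝ) : marchaudRightC α f p.1 p.2 = directionalMarchaud α (0, 1) f p := by
  have hshift := (measurePreserving_add_left (volume : Measure ℝ) p.2).setIntegral_preimage_emb
    (measurableEmbedding_addLeft p.2)
    (fun τ => (f (p.1, p.2) - f (p.1, τ)) / (((τ - p.2) ^ (1 + α) : ℝ) : ℂ)) (Ioi p.2)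
  rw [preimage_const_add_Ioi, sub_self] at hshift
  have hintegrand : EqOn
      (fun r => (f (p.1, p.2) - f (p.1, p.2 + r)) / (((p.2 + r - p.2) ^ (1 + α) : ℝ) : ℂ))
      (fun r => -(r ^ (-1 - α) • Δ_[r • ((0, 1) : 𝔼 × ℝ)] f p)) (Ioi 0) := fun r (hr : 0 < r) => by
    have hpow : r ^ (-1 - α) = (r ^ (1 + α))⁻¹ := by
      rw [← Real.rpow_neg hr.le]
      ring_nf
    have hadd : p + r • ((0, 1) : 𝔼 × ℝ) = (p.1, p.2 + r) := by ext <;> simp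
    simp only [fwdDiff, hadd, add_sub_cancel_left, hpow, Complex.real_smul, Complex.ofReal_inv]
    ring
  rw [marchaudRightC, directionalMarchaud, ← hshift,
    setIntegral_congr_fun measurableSet_Ioi hintegrand, integral_neg, Calpha,
    abs_of_neg (Gamma_neg_lt_zero h0 h1), Complex.real_smul]
  push_cast
  ring

theorem fracLapC_eq_fracLapAlong (s : ℝ) (f : 𝔼 × ℝ → ℂ) (p : 𝔼 × ℝ) :
    fracLapC s f p.1 p.2 = fracLapAlong s (ContinuousLinearMap.inl ℝ 𝔼 ℝ) f p := by
  have hadd (y : 𝔼) : p + ContinuousLinearMap.inl ℝ 𝔼 ℝ y = (p.1 + y, p.2) := by ext <;> simp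
  have hsub (y : 𝔼) : p + -ContinuousLinearMap.inl ℝ 𝔼 ℝ y = (p.1 - y, p.2) := by
    ext <;> simp [sub_eq_add_neg]
  rw [fracLapC, fracLapAlong, finrank_euclideanSpace_fin, Complex.real_smul]
  congr 2 with y
  rw [fwdDiff, fwdDiff, fwdDiff, add_neg_cancel_right, hadd, hsub, Real.rpow_neg (norm_nonneg y),
    Complex.real_smul, Complex.ofReal_inv]
  ring

end SpaceTime

theorem fourier_transform_right_marchaud_plus_fracLap_general
    (n : ℕ) (hn : 1 ≤ n) (α s : ℝ) (hα0 : 0 < α) (hα1 : α < 1) (hs0 : 0 < s) (hs1 : s < 1)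
    (f : EuclideanSpace ℝ (Fin n) × ℝ → ℂ) (hf : ContDiff ℝ 2 f) (hf0 : Integrable f)
    (hf1 : Integrable (fderiv ℝ f)) (hf2 : Integrable (fderiv ℝ (fderiv ℝ f))) :
    Integrable (fun p : EuclideanSpace ℝ (Fin n) × ℝ =>
      marchaudRightC α f p.1 p.2 + fracLapC s f p.1 p.2) ∧
    ∀ (ξ : EuclideanSpace ℝ (Fin n)) (ρ : ℝ),
      fourierTrans (fun p => marchaudRightC α f p.1 p.2 + fracLapC s f p.1 p.2) ξ ρ =
        ((-(Complex.I * (ρ : ℂ))) ^ (α : ℂ) + ((‖ξ‖ ^ (2 * s) : ℝ) : ℂ)) *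
          fourierTrans f ξ ρ := by
  have : Nonempty (Fin n) := ⟨⟨0, hn⟩⟩
  have hL := continuous_spaceTimePairing (E := EuclideanSpace ℝ (Fin n))
  simp only [marchaudRightC_eq_directionalMarchaud hα0 hα1, fracLapC_eq_fracLapAlong]
  have hM := integrable_directionalMarchaud hα0 hα1 hf0 (hf.of_le one_le_two) hf1 (0, 1)
  have hΔ := integrable_fracLapAlong hs0 hs1 hf0 hf hf2 (ContinuousLinearMap.inl ℝ _ ℝ)
  refine ⟨hM.add hΔ, fun ξ ρ => ?_⟩
  have hξ (y) : spaceTimePairing _ (ContinuousLinearMap.inl ℝ _ ℝ y) (ξ, ρ) = inner ℝ ξ y := by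
    simp [spaceTimePairing_apply, real_inner_comm]
  change fourierTrans (directionalMarchaud α (0, 1) f + fracLapAlong s _ f) ξ ρ = _
  rw [fourierTrans_eq_fourierIntegral, fourierTrans_eq_fourierIntegral,
    VectorFourier.fourierIntegral_add Real.continuous_probChar hL hM hΔ, Pi.add_apply,
    fourierIntegral_directionalMarchaud hα0 hα1 hL hf0 (hf.of_le one_le_two) hf1,
    fourierIntegral_fracLapAlong hs0 hs1 hL hf0 hf hf2 hξ, ← add_smul, smul_eq_mul, mul_left_comm,
    spaceTimePairing_apply, inner_zero_left, zero_add, one_mul]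

/-- for a complex-valued Schwartz function `φ` on `ℝⁿ × ℝ`, the function
`D_right^α φ + (-Δ)^s φ` is integrable and
`𝓕[D_right^α φ + (-Δ)^s φ](ξ,ρ) = ((-iρ)^α + |ξ|^{2s})·𝓕φ(ξ,ρ)`. -/
theorem fourier_transform_right_marchaud_plus_fracLap
    (n : ℕ) (hn : 1 ≤ n) (α s : ℝ) (hα0 : 0 < α) (hα1 : α < 1)
    (hs0 : 0 < s) (hs1 : s < 1)
    (φ : SchwartzMap (EuclideanSpace ℝ (Fin n) × ℝ) ℂ) :
    Integrable (fun p : EuclideanSpace ℝ (Fin n) × ℝ =>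
      marchaudRightC α (⇑φ) p.1 p.2 + fracLapC s (⇑φ) p.1 p.2) ∧
    ∀ (ξ : EuclideanSpace ℝ (Fin n)) (ρ : ℝ),
      fourierTrans (fun p => marchaudRightC α (⇑φ) p.1 p.2 + fracLapC s (⇑φ) p.1 p.2) ξ ρ =
        ((-(Complex.I * (ρ : ℂ))) ^ (α : ℂ) + ((‖ξ‖ ^ (2 * s) : ℝ) : ℂ)) *
          fourierTrans (⇑φ) ξ ρ :=
  fourier_transform_right_marchaud_plus_fracLap_general n hn α s hα0 hα1 hs0 hs1 φ (φ.smooth 2)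
    φ.integrable (SchwartzMap.fderivCLM ℝ _ _ φ).integrable
    (SchwartzMap.fderivCLM ℝ _ _ (SchwartzMap.fderivCLM ℝ _ _ φ)).integrable
end

section
/- Let n ≥ 1 and 0 < α, s < 1. For any two complex-valued Schwartz functions u and φ on ℝⁿ×ℝ, one has the integration by parts formula ∫_ℝ ∫_{ℝⁿ} [D_left^α u(x,t) + (-Δ)^s u(x,t)]·conj(φ(x,t)) dx dt = ∫_ℝ ∫_{ℝⁿ} u(x,t)·conj(D_right^α φ(x,t) + (-Δ)^s φ(x,t)) dx dt, where conj denotes complex conjugation (both integrals converge absolutely). -/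
open MeasureTheory Set

open Asymptotics Filter Module
open scoped ComplexConjugate NNReal Topology

/-!
For a fixed increment `v`, translation invariance of the measure makes `f ↦ f (· + v)` and
`f ↦ f (· - v)` adjoint to each other. Hence the backward difference `f - f (· - v)` is adjoint to
the forward difference `f - f (· + v)`, and the second difference `2f - f (· + v) - f (· - v)` is
self-adjoint. The left Marchaud derivative is an integral of backward differences, the right one
of forward differences, and the fractional Laplacian of second differences, each against a singular
weight. Boundedness and smoothness bound the differences by `min (|v| ^ b) 1`, with `b` larger than
the order of the operator; this is integrable against the weight, so Fubini's theorem lets the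
adjointness pass through the integral over the increments.
-/

section AdjointPairing

variable {P 𝕜 : Type*} [MeasurableSpace P] [RCLike 𝕜] {μ : Measure P}

theorem integrable_prod_mul_of_norm_le {Y : Type*} [MeasurableSpace Y] {ν : Measure Y}
    {T : P → Y → 𝕜} {h : P → 𝕜} (hh : Integrable h μ)
    (hT : AEStronglyMeasurable (Function.uncurry T) (μ.prod ν)) {g : Y → ℝ} (hg : Integrable g ν)
    (hTg : ∀ᵐ y ∂ν, ∀ p, ‖T p y‖ ≤ g y) :
    Integrable (Function.uncurry fun p y => T p y * h p) (μ.prod ν) := by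
  refine (hh.norm.mul_prod hg).mono' (hT.mul hh.aestronglyMeasurable.comp_fst) ?_
  filter_upwards [Measure.quasiMeasurePreserving_snd.ae hTg] with z hz
  rw [Function.uncurry, norm_mul, mul_comm]
  gcongr
  exact hz z.1

/-- The relation `⟨Tu, φ⟩ = ⟨u, Sφ⟩` in `L²(μ)`, with both pairings absolutely convergent. It
expresses that two operators are formally adjoint on the pair `(u, φ)`; the operators enter only
through the functions `Tu` and `Sφ`, so that they need no domain. -/
structure AdjointPairing (μ : Measure P) (u Tu φ Sφ : P → 𝕜) : Prop where
  integrable_left : Integrable (fun p => Tu p * conj (φ p)) μ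
  integrable_right : Integrable (fun p => u p * conj (Sφ p)) μ
  integral_eq : ∫ p, Tu p * conj (φ p) ∂μ = ∫ p, u p * conj (Sφ p) ∂μ

namespace AdjointPairing

variable {u Tu Tu' φ Sφ Sφ' : P → 𝕜}

theorem add (h : AdjointPairing μ u Tu φ Sφ) (h' : AdjointPairing μ u Tu' φ Sφ') :
    AdjointPairing μ u (fun p => Tu p + Tu' p) φ (fun p => Sφ p + Sφ' p) where
  integrable_left := by
    simpa only [add_mul] using! h.integrable_left.add h'.integrable_left
  integrable_right := by
    simpa only [map_add, mul_add] using! h.integrable_right.add h'.integrable_right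
  integral_eq := by
    simp only [map_add, add_mul, mul_add]
    rw [integral_add h.integrable_left h'.integrable_left,
      integral_add h.integrable_right h'.integrable_right, h.integral_eq, h'.integral_eq]

theorem const_mul (c : 𝕜) (h : AdjointPairing μ u Tu φ Sφ) :
    AdjointPairing μ u (fun p => c * Tu p) φ (fun p => conj c * Sφ p) where
  integrable_left := by
    simpa only [mul_assoc] using h.integrable_left.const_mul c
  integrable_right := by
    simpa only [map_mul, RCLike.conj_conj, mul_left_comm] using h.integrable_right.const_mul c
  integral_eq := by
    simp only [map_mul, RCLike.conj_conj, mul_assoc, mul_left_comm (u _)]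
    rw [integral_const_mul, integral_const_mul, h.integral_eq]

theorem ofReal_mul (c : ℝ) (h : AdjointPairing μ u Tu φ Sφ) :
    AdjointPairing μ u (fun p => (c : 𝕜) * Tu p) φ (fun p => (c : 𝕜) * Sφ p) := by
  simpa only [RCLike.conj_ofReal] using h.const_mul (c : 𝕜)

theorem div_ofReal (h : AdjointPairing μ u Tu φ Sφ) (c : ℝ) :
    AdjointPairing μ u (fun p => Tu p / (c : 𝕜)) φ (fun p => Sφ p / (c : 𝕜)) := by
  simpa only [RCLike.ofReal_inv, inv_mul_eq_div] using h.ofReal_mul c⁻¹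

theorem sub (h : AdjointPairing μ u Tu φ Sφ) (h' : AdjointPairing μ u Tu' φ Sφ') :
    AdjointPairing μ u (fun p => Tu p - Tu' p) φ (fun p => Sφ p - Sφ' p) := by
  simpa [sub_eq_add_neg] using h.add (h'.const_mul (-1))

section Translation

variable {V : Type*} [AddGroup V] [MeasurableSpace V] [MeasurableAdd V] {μ : Measure V}
  [μ.IsAddRightInvariant] {u φ : V → 𝕜} {M : ℝ}

theorem translate (hu : AEStronglyMeasurable u μ) (hM : ∀ p, ‖u p‖ ≤ M) (hφ : Integrable φ μ)
    (v : V) : AdjointPairing μ u (fun p => u (p + v)) φ (fun p => φ (p - v)) := by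
  have hright : Integrable (fun p => u p * conj (φ (p - v))) μ :=
    (RCLike.conjCLE.toContinuousLinearMap.integrable_comp (hφ.comp_sub_right v)).bdd_mul hu
      (.of_forall hM)
  refine ⟨by simpa using hright.comp_add_right v, hright, ?_⟩
  simpa using integral_add_right_eq_self (μ := μ) (fun p => u p * conj (φ (p - v))) v

theorem self (hu : AEStronglyMeasurable u μ) (hM : ∀ p, ‖u p‖ ≤ M) (hφ : Integrable φ μ) :
    AdjointPairing μ u u φ φ := by
  simpa using translate hu hM hφ 0

theorem difference (hu : AEStronglyMeasurable u μ) (hM : ∀ p, ‖u p‖ ≤ M) (hφ : Integrable φ μ)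
    (v : V) : AdjointPairing μ u (fun p => u p - u (p - v)) φ (fun p => φ p - φ (p + v)) := by
  simpa [sub_eq_add_neg] using (self hu hM hφ).sub (translate hu hM hφ (-v))

theorem second_difference (hu : AEStronglyMeasurable u μ) (hM : ∀ p, ‖u p‖ ≤ M)
    (hφ : Integrable φ μ) (v : V) :
    AdjointPairing μ u (fun p => 2 * u p - u (p + v) - u (p - v)) φ
      (fun p => 2 * φ p - φ (p + v) - φ (p - v)) := by
  simpa [← sub_eq_add_neg, RCLike.ofReal_ofNat, sub_right_comm _ (φ (_ - v))] using
    (((self hu hM hφ).ofReal_mul 2).sub (translate hu hM hφ v)).sub (translate hu hM hφ (-v))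

end Translation

section Integral

variable {Y : Type*} [MeasurableSpace Y] {ν : Measure Y} {T S : P → Y → 𝕜}

theorem integral [SFinite μ] [SFinite ν] (hu : Integrable u μ) (hφ : Integrable φ μ)
    (hT : AEStronglyMeasurable (Function.uncurry T) (μ.prod ν))
    (hS : AEStronglyMeasurable (Function.uncurry S) (μ.prod ν)) {g₁ g₂ : Y → ℝ}
    (hg₁ : Integrable g₁ ν) (hg₂ : Integrable g₂ ν) (hTg : ∀ᵐ y ∂ν, ∀ p, ‖T p y‖ ≤ g₁ y)
    (hSg : ∀ᵐ y ∂ν, ∀ p, ‖S p y‖ ≤ g₂ y)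
    (hTS : ∀ᵐ y ∂ν, AdjointPairing μ u (T · y) φ (S · y)) :
    AdjointPairing μ u (fun p => ∫ y, T p y ∂ν) φ (fun p => ∫ y, S p y ∂ν) := by
  have hTφ := integrable_prod_mul_of_norm_le
    (RCLike.conjCLE.toContinuousLinearMap.integrable_comp hφ) hT hg₁ hTg
  have hSu := integrable_prod_mul_of_norm_le hu (T := fun p y => conj (S p y))
    (RCLike.continuous_conj.comp_aestronglyMeasurable hS) hg₂ (by simpa using hSg)
  have left_eq p : (∫ y, T p y ∂ν) * conj (φ p) = ∫ y, T p y * conj (φ p) ∂ν :=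
    (integral_mul_const _ _).symm
  have right_eq p : u p * conj (∫ y, S p y ∂ν) = ∫ y, conj (S p y) * u p ∂ν := by
    rw [integral_mul_const, integral_conj, mul_comm]
  constructor <;> simp only [left_eq, right_eq]
  · exact hTφ.integral_prod_left
  · exact hSu.integral_prod_left
  · calc ∫ p, ∫ y, T p y * conj (φ p) ∂ν ∂μ
        = ∫ y, ∫ p, T p y * conj (φ p) ∂μ ∂ν := integral_integral_swap hTφ
      _ = ∫ y, ∫ p, conj (S p y) * u p ∂μ ∂ν := integral_congr_ae <| by
          filter_upwards [hTS] with y hy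
          simpa only [mul_comm (u _)] using hy.integral_eq
      _ = ∫ p, ∫ y, conj (S p y) * u p ∂ν ∂μ := (integral_integral_swap hSu).symm

theorem integral_div_ofReal [SFinite μ] [SFinite ν] (hu : Integrable u μ) (hφ : Integrable φ μ)
    (hT : AEStronglyMeasurable (Function.uncurry T) (μ.prod ν))
    (hS : AEStronglyMeasurable (Function.uncurry S) (μ.prod ν)) {k m : Y → ℝ} (hk : Measurable k)
    (hmk : Integrable (fun y => m y / k y) ν) {C D : ℝ}
    (hTm : ∀ᵐ y ∂ν, ∀ p, ‖T p y‖ ≤ C * m y) (hSm : ∀ᵐ y ∂ν, ∀ p, ‖S p y‖ ≤ D * m y)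
    (hTS : ∀ᵐ y ∂ν, AdjointPairing μ u (T · y) φ (S · y)) :
    AdjointPairing μ u (fun p => ∫ y, T p y / (k y : 𝕜) ∂ν) φ
      (fun p => ∫ y, S p y / (k y : 𝕜) ∂ν) := by
  have hk' : AEStronglyMeasurable (fun z : P × Y => (k z.2 : 𝕜)⁻¹) (μ.prod ν) :=
    Measurable.aestronglyMeasurable (by fun_prop)
  have norm_div_le {z : 𝕜} {c : ℝ} {y : Y} (hz : ‖z‖ ≤ c * m y) :
      ‖z / (k y : 𝕜)‖ ≤ ‖c * (m y / k y)‖ := by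
    rw [← mul_div_assoc, norm_div, norm_div, RCLike.norm_ofReal, Real.norm_eq_abs (k y)]
    gcongr
    exact hz.trans (Real.le_norm_self _)
  refine integral hu hφ ?_ ?_ (hmk.const_mul C).norm (hmk.const_mul D).norm
    (hTm.mono fun y hy p => norm_div_le (hy p)) (hSm.mono fun y hy p => norm_div_le (hy p))
    (hTS.mono fun y hy => hy.div_ofReal (k y))
  · simpa only [div_eq_mul_inv] using! hT.mul hk'
  · simpa only [div_eq_mul_inv] using! hS.mul hk'

end Integral

end AdjointPairing

end AdjointPairing

section SingularWeight

theorem integrableOn_Ioi_min_rpow_div_rpow {a b : ℝ} (ha : 0 < a) (hab : a < b) :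
    IntegrableOn (fun r : ℝ => min (r ^ b) 1 / r ^ (1 + a)) (Ioi 0) := by
  have hb : 0 < b := ha.trans hab
  have hcont : Continuous fun r : ℝ => min (r ^ b) 1 :=
    (Real.continuous_rpow_const hb.le).min continuous_const
  have htop : (fun r : ℝ => min (r ^ b) 1) =O[atTop] (· ^ (-0 : ℝ)) := by
    refine .of_bound 1 ((eventually_ge_atTop 0).mono fun r hr => ?_)
    simp [abs_of_nonneg (le_min (Real.rpow_nonneg hr b) zero_le_one)]
  have hbot : (fun r : ℝ => min (r ^ b) 1) =O[𝓝[>] 0] (· ^ (-(-b))) := by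
    refine .of_bound 1 (eventually_mem_nhdsWithin.mono fun r (hr : 0 < r) => ?_)
    rw [neg_neg, one_mul, Real.norm_of_nonneg (by positivity), Real.norm_of_nonneg (by positivity)]
    exact min_le_left _ _
  refine (mellin_convergent_of_isBigO_scalar (s := -a)
    (hcont.locallyIntegrable.locallyIntegrableOn _) htop (by linarith) hbot
    (by linarith)).congr_fun (fun r (hr : 0 < r) => ?_) measurableSet_Ioi
  rw [div_eq_inv_mul, ← Real.rpow_neg hr.le, neg_add', neg_sub_comm]

theorem integrable_min_norm_rpow_div_norm_rpow {E : Type*} [NormedAddCommGroup E] [NormedSpace ℝ E]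
    [FiniteDimensional ℝ E] [Nontrivial E] [MeasurableSpace E] [BorelSpace E] (μ : Measure E)
    [μ.IsAddHaarMeasure] {a b : ℝ} (ha : 0 < a) (hab : a < b) :
    Integrable (fun y : E => min (‖y‖ ^ b) 1 / ‖y‖ ^ (finrank ℝ E + a)) μ := by
  refine (integrable_fun_norm_addHaar μ
    (f := fun r : ℝ => min (r ^ b) 1 / r ^ (finrank ℝ E + a))).2 ?_
  refine (integrableOn_Ioi_min_rpow_div_rpow ha hab).congr_fun (fun r (hr : 0 < r) => ?_)
    measurableSet_Ioi
  have hrpow : r ^ (finrank ℝ E + a) = r ^ (finrank ℝ E - 1) * r ^ (1 + a) := by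
    rw [← Real.rpow_natCast, ← Real.rpow_add hr, Nat.cast_pred finrank_pos]
    ring_nf
  simp only [smul_eq_mul, hrpow]
  field_simp

theorem le_max_mul_min_one {x w A B : ℝ} (hw : 0 ≤ w) (hA : x ≤ A * w) (hB : x ≤ B) :
    x ≤ max A B * min w 1 := by
  rcases le_total w 1 with h | h
  · rw [min_eq_left h]
    exact hA.trans (by gcongr; exact le_max_left A B)
  · rw [min_eq_right h, mul_one]
    exact hB.trans (le_max_right A B)

end SingularWeight

section Regularity

/-- Functions in `L¹(μ)` that are bounded, pointwise rather than almost everywhere because the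
operators below involve pointwise values. -/
structure BoundedIntegrable {P : Type*} [MeasurableSpace P] (f : P → ℂ) (μ : Measure P) :
    Prop where
  measurable : Measurable f
  integrable : Integrable f μ
  bounded : ∃ M, ∀ p, ‖f p‖ ≤ M

variable {E : Type*} [NormedAddCommGroup E]

/-- Hölder continuity of order `β` in the time variable, uniformly in space: the regularity that
makes Marchaud derivatives of order less than `β` converge. -/
def HolderInTime (β : ℝ≥0) (f : E × ℝ → ℂ) : Prop :=
  ∃ C, ∀ x, HolderWith C β fun t => f (x, t)

/-- The Zygmund condition of order `γ` on second differences in the space variable, uniformly in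
time: the regularity that makes `(-Δ)^s` converge for `2s < γ`. -/
def ZygmundInSpace (γ : ℝ) (f : E × ℝ → ℂ) : Prop :=
  ∃ C, ∀ x y t, ‖2 * f (x, t) - f (x + y, t) - f (x - y, t)‖ ≤ C * ‖y‖ ^ γ

theorem HolderInTime.exists_norm_sub_le {β : ℝ≥0} {f : E × ℝ → ℂ} (hf : HolderInTime β f) {M : ℝ}
    (hM : ∀ p, ‖f p‖ ≤ M) :
    ∃ C, ∀ p r, ‖f p - f (p + (0, r))‖ ≤ C * min (|r| ^ (β : ℝ)) 1 := by
  obtain ⟨A, hA⟩ := hf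
  refine ⟨max A (2 * M), fun ⟨x, t⟩ r => le_max_mul_min_one (by positivity) ?_ ?_⟩
  · simpa [dist_eq_norm] using (hA x).dist_le t (t + r)
  · linarith [norm_sub_le (f (x, t)) (f ((x, t) + (0, r))), hM (x, t), hM ((x, t) + (0, r))]

theorem ZygmundInSpace.exists_norm_second_difference_le {γ : ℝ} {f : E × ℝ → ℂ}
    (hf : ZygmundInSpace γ f) {M : ℝ} (hM : ∀ p, ‖f p‖ ≤ M) :
    ∃ C, ∀ p y, ‖2 * f p - f (p + (y, 0)) - f (p - (y, 0))‖ ≤ C * min (‖y‖ ^ γ) 1 := by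
  obtain ⟨A, hA⟩ := hf
  refine ⟨max A (4 * M), fun p y => le_max_mul_min_one (by positivity) ?_ ?_⟩
  · simpa [Prod.add_def, Prod.sub_def] using hA p.1 y p.2
  · calc ‖2 * f p - f (p + (y, 0)) - f (p - (y, 0))‖
        ≤ 2 * ‖f p‖ + ‖f (p + (y, 0))‖ + ‖f (p - (y, 0))‖ := by
          have h := norm_sub_le (2 * f p - f (p + (y, 0))) (f (p - (y, 0)))
          have h' := norm_sub_le (2 * f p) (f (p + (y, 0)))
          rw [Complex.norm_mul, Complex.norm_ofNat] at h'
          linarith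
      _ ≤ 4 * M := by linarith [hM p, hM (p + (y, 0)), hM (p - (y, 0))]

end Regularity

section SchwartzRegularity

variable {E F : Type*} [NormedAddCommGroup E] [NormedSpace ℝ E] [NormedAddCommGroup F]
  [NormedSpace ℝ F]

theorem exists_lipschitzWith_schwartzMap (f : SchwartzMap E F) : ∃ L, LipschitzWith L f :=
  ⟨⟨_, apply_nonneg _ _⟩, lipschitzWith_of_nnnorm_fderiv_le (𝕜 := ℝ) f.differentiable
    ((SchwartzMap.fderivCLM ℝ E F f).norm_le_seminorm ℝ)⟩

theorem norm_second_difference_le_of_lipschitzWith_fderiv {f : E → F} {L : ℝ≥0}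
    (hf : Differentiable ℝ f) (hL : LipschitzWith L (fderiv ℝ f)) (p v : E) :
    ‖(f p - f (p + v)) - (f (p - v) - f p)‖ ≤ L * ‖v‖ ^ 2 := by
  have hderiv q : HasFDerivAt (fun q => f q - f (q + v)) (fderiv ℝ f q - fderiv ℝ f (q + v)) q :=
    (hf q).hasFDerivAt.sub ((hasFDerivAt_comp_add_right v).2 (hf (q + v)).hasFDerivAt)
  have hmean := convex_univ.norm_image_sub_le_of_norm_hasFDerivWithin_le (𝕜 := ℝ)
    (fun q _ => (hderiv q).hasFDerivWithinAt) (C := L * ‖v‖)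
    (fun q _ => by simpa using hL.norm_sub_le q (q + v)) (mem_univ (p - v)) (mem_univ p)
  simpa [pow_two, mul_assoc] using hmean

theorem boundedIntegrable_schwartzMap [MeasurableSpace E] [BorelSpace E]
    [SecondCountableTopology E] (μ : Measure E) [μ.HasTemperateGrowth] (f : SchwartzMap E ℂ) :
    BoundedIntegrable f μ :=
  ⟨f.continuous.measurable, f.integrable, _, f.norm_le_seminorm ℝ⟩

theorem holderInTime_schwartzMap (f : SchwartzMap (E × ℝ) ℂ) : HolderInTime 1 f := by
  obtain ⟨L, hL⟩ := exists_lipschitzWith_schwartzMap f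
  exact ⟨L * 1, fun x => (hL.comp (LipschitzWith.prodMk_left x)).holderWith⟩

theorem zygmundInSpace_schwartzMap (f : SchwartzMap (E × ℝ) ℂ) : ZygmundInSpace 2 f := by
  obtain ⟨L, hL⟩ := exists_lipschitzWith_schwartzMap (SchwartzMap.fderivCLM ℝ _ ℂ f)
  refine ⟨L, fun x y t => ?_⟩
  have hsplit : 2 * f (x, t) - f (x + y, t) - f (x - y, t) =
      (f (x, t) - f (x + y, t)) - (f (x - y, t) - f (x, t)) := by ring
  simpa [hsplit, Prod.norm_def] using
    norm_second_difference_le_of_lipschitzWith_fderiv f.differentiable hL (x, t) (y, 0)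

end SchwartzRegularity

section Operators

instance isAddHaarMeasure_volume_prod {G H : Type*} [AddGroup G] [TopologicalSpace G]
    [MeasureSpace G] [MeasurableAdd G] [AddGroup H] [TopologicalSpace H] [MeasureSpace H]
    [MeasurableAdd H] [SFinite (volume : Measure G)] [SFinite (volume : Measure H)]
    [(volume : Measure G).IsAddHaarMeasure] [(volume : Measure H).IsAddHaarMeasure] :
    (volume : Measure (G × H)).IsAddHaarMeasure :=
  inferInstanceAs (Measure.prod volume volume).IsAddHaarMeasure

variable {n : ℕ}

theorem marchaudLeftC_eq_integral_Ioi (α : ℝ) (f : EuclideanSpace ℝ (Fin n) × ℝ → ℂ)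
    (p : EuclideanSpace ℝ (Fin n) × ℝ) :
    marchaudLeftC α f p.1 p.2 = (Calpha α : ℂ) *
      ∫ r in Ioi (0 : ℝ), (f p - f (p - (0, r))) / ((r ^ (1 + α) : ℝ) : ℂ) := by
  rw [marchaudLeftC, ← integral_indicator measurableSet_Iio,
    ← integral_indicator measurableSet_Ioi, ← integral_sub_left_eq_self _ volume p.2]
  congr 2 with r
  simp [indicator, Prod.sub_def]

theorem marchaudRightC_eq_integral_Ioi (α : ℝ) (f : EuclideanSpace ℝ (Fin n) × ℝ → ℂ)
    (p : EuclideanSpace ℝ (Fin n) × ℝ) :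
    marchaudRightC α f p.1 p.2 = (Calpha α : ℂ) *
      ∫ r in Ioi (0 : ℝ), (f p - f (p + (0, r))) / ((r ^ (1 + α) : ℝ) : ℂ) := by
  rw [marchaudRightC, ← integral_indicator measurableSet_Ioi,
    ← integral_indicator measurableSet_Ioi, ← integral_add_left_eq_self _ p.2]
  congr 2 with r
  simp [indicator, Prod.add_def]

theorem fracLapC_eq_integral (s : ℝ) (f : EuclideanSpace ℝ (Fin n) × ℝ → ℂ)
    (p : EuclideanSpace ℝ (Fin n) × ℝ) :
    fracLapC s f p.1 p.2 = ((Cns n s / 2 : ℝ) : ℂ) * ∫ y : EuclideanSpace ℝ (Fin n),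
      (2 * f p - f (p + (y, 0)) - f (p - (y, 0))) / ((‖y‖ ^ ((n : ℝ) + 2 * s) : ℝ) : ℂ) := by
  simp [fracLapC, Prod.add_def, Prod.sub_def]

variable {u φ : EuclideanSpace ℝ (Fin n) × ℝ → ℂ}

theorem adjointPairing_marchaud {α : ℝ} {β : ℝ≥0} (hα : 0 < α) (hαβ : α < β)
    (hu : BoundedIntegrable u volume) (hut : HolderInTime β u)
    (hφ : BoundedIntegrable φ volume) (hφt : HolderInTime β φ) :
    AdjointPairing volume u (fun p => marchaudLeftC α u p.1 p.2) φ
      (fun p => marchaudRightC α φ p.1 p.2) := by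
  simp only [marchaudLeftC_eq_integral_Ioi, marchaudRightC_eq_integral_Ioi]
  have hu_meas := hu.measurable
  have hφ_meas := hφ.measurable
  obtain ⟨M, hM⟩ := hu.bounded
  obtain ⟨N, hN⟩ := hφ.bounded
  obtain ⟨C, hC⟩ := hut.exists_norm_sub_le hM
  obtain ⟨D, hD⟩ := hφt.exists_norm_sub_le hN
  refine .ofReal_mul _ <| .integral_div_ofReal hu.integrable hφ.integrable
    (k := fun r => r ^ (1 + α)) (C := C) (D := D)
    (Measurable.aestronglyMeasurable (by unfold Function.uncurry; fun_prop))
    (Measurable.aestronglyMeasurable (by unfold Function.uncurry; fun_prop)) (by fun_prop)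
    (integrableOn_Ioi_min_rpow_div_rpow hα hαβ) ?_ ?_
    (.of_forall fun r => .difference hu_meas.aestronglyMeasurable hM hφ.integrable (0, r))
  · filter_upwards [ae_restrict_mem measurableSet_Ioi] with r hr p
    simpa [sub_eq_add_neg, abs_of_pos (mem_Ioi.1 hr)] using hC p (-r)
  · filter_upwards [ae_restrict_mem measurableSet_Ioi] with r hr p
    simpa [abs_of_pos (mem_Ioi.1 hr)] using hD p r

theorem adjointPairing_fracLapC [NeZero n] {s γ : ℝ} (hs : 0 < s) (hsγ : 2 * s < γ)
    (hu : BoundedIntegrable u volume) (hux : ZygmundInSpace γ u)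
    (hφ : BoundedIntegrable φ volume) (hφx : ZygmundInSpace γ φ) :
    AdjointPairing volume u (fun p => fracLapC s u p.1 p.2) φ
      (fun p => fracLapC s φ p.1 p.2) := by
  simp only [fracLapC_eq_integral]
  have hu_meas := hu.measurable
  have hφ_meas := hφ.measurable
  obtain ⟨M, hM⟩ := hu.bounded
  obtain ⟨N, hN⟩ := hφ.bounded
  obtain ⟨C, hC⟩ := hux.exists_norm_second_difference_le hM
  obtain ⟨D, hD⟩ := hφx.exists_norm_second_difference_le hN
  have hweight := integrable_min_norm_rpow_div_norm_rpow
    (volume : Measure (EuclideanSpace ℝ (Fin n))) (mul_pos two_pos hs) hsγ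
  rw [finrank_euclideanSpace_fin] at hweight
  exact .ofReal_mul _ <| .integral_div_ofReal hu.integrable hφ.integrable
    (k := fun y => ‖y‖ ^ ((n : ℝ) + 2 * s))
    (Measurable.aestronglyMeasurable (by unfold Function.uncurry; fun_prop))
    (Measurable.aestronglyMeasurable (by unfold Function.uncurry; fun_prop)) (by fun_prop)
    hweight (.of_forall fun y p => hC p y) (.of_forall fun y p => hD p y)
    (.of_forall fun y => .second_difference hu_meas.aestronglyMeasurable hM hφ.integrable (y, 0))

end Operators

theorem integration_by_parts_dual_fractional_general {n : ℕ} (hn : 1 ≤ n) {α s γ : ℝ} {β : ℝ≥0}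
    (hα : 0 < α) (hαβ : α < β) (hs : 0 < s) (hsγ : 2 * s < γ)
    {u φ : EuclideanSpace ℝ (Fin n) × ℝ → ℂ}
    (hu : BoundedIntegrable u volume) (hut : HolderInTime β u) (hux : ZygmundInSpace γ u)
    (hφ : BoundedIntegrable φ volume) (hφt : HolderInTime β φ) (hφx : ZygmundInSpace γ φ) :
    AdjointPairing volume u (fun p => marchaudLeftC α u p.1 p.2 + fracLapC s u p.1 p.2) φ
      (fun p => marchaudRightC α φ p.1 p.2 + fracLapC s φ p.1 p.2) :=
  have : NeZero n := ⟨by lia⟩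
  (adjointPairing_marchaud hα hαβ hu hut hφ hφt).add (adjointPairing_fracLapC hs hsγ hu hux hφ hφx)

/-- "integration by parts" for the dual fractional operator: for Schwartz
functions `u, φ` on `ℝⁿ × ℝ`,
`∫∫ [D_left^α u + (-Δ)^s u]·conj(φ) = ∫∫ u·conj(D_right^α φ + (-Δ)^s φ)`,
both integrals converging absolutely. -/
theorem integration_by_parts_dual_fractional
    (n : ℕ) (hn : 1 ≤ n) (α s : ℝ) (hα0 : 0 < α) (hα1 : α < 1)
    (hs0 : 0 < s) (hs1 : s < 1)
    (u φ : SchwartzMap (EuclideanSpace ℝ (Fin n) × ℝ) ℂ) :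
    Integrable (fun p : EuclideanSpace ℝ (Fin n) × ℝ =>
      (marchaudLeftC α (⇑u) p.1 p.2 + fracLapC s (⇑u) p.1 p.2) * starRingEnd ℂ (φ p)) ∧
    Integrable (fun p : EuclideanSpace ℝ (Fin n) × ℝ =>
      u p * starRingEnd ℂ (marchaudRightC α (⇑φ) p.1 p.2 + fracLapC s (⇑φ) p.1 p.2)) ∧
    (∫ p : EuclideanSpace ℝ (Fin n) × ℝ,
      (marchaudLeftC α (⇑u) p.1 p.2 + fracLapC s (⇑u) p.1 p.2) * starRingEnd ℂ (φ p)) =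
    ∫ p : EuclideanSpace ℝ (Fin n) × ℝ,
      u p * starRingEnd ℂ (marchaudRightC α (⇑φ) p.1 p.2 + fracLapC s (⇑φ) p.1 p.2) := by
  have general := integration_by_parts_dual_fractional_general hn hα0 (β := 1) (by simpa) hs0
    (γ := 2) (by linarith) (boundedIntegrable_schwartzMap volume u) (holderInTime_schwartzMap u)
    (zygmundInSpace_schwartzMap u) (boundedIntegrable_schwartzMap volume φ)
    (holderInTime_schwartzMap φ) (zygmundInSpace_schwartzMap φ)
  exact ⟨general.integrable_left, general.integrable_right, general.integral_eq⟩
end
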